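/- (Forward Substitution Lemma, case 1.) If there are derivations Γ;(Δ, x:⋃Δ') ⊢ M : β and ;Δ' ⊢! N : []_{⋃Δ'} in the multi-type system for the λI-calculus, where x ∉ supp(Γ) and Δ ≍ Δ', then there is a derivation Γ;(Δ ∨ Δ') ⊢ M[N/x] : β. -/

import Mathlib

set_option maxHeartbeats 1000000

/-! # λ-terms (named variables over ℕ) -/

inductive Lam : Type
  | var : ℕ → Lam
  | app : Lam → Lam → Lam
  | lam : ℕ → Lam → Lam
deriving DecidableEq

namespace Lam

/-- Free variables of a λ-term. -/
def fv : Lam → Finset ℕ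
  | var x => {x}
  | app M N => M.fv ∪ N.fv
  | lam x M => M.fv.erase x

/-- λI-terms: every abstraction `λx.M` satisfies `x ∈ fv M`. -/
def IsI : Lam → Prop
  | var _ => True
  | app M N => M.IsI ∧ N.IsI
  | lam x M => x ∈ M.fv ∧ M.IsI

/-- A variable not belonging to a given finite set. -/
def freshVar (s : Finset ℕ) : ℕ := (s.sup id) + 1

/-- Capture-avoiding simultaneous substitution (bound variables are freshened). -/
def substF : Lam → (ℕ → Lam) → Lam
  | var x, σ => σ x
  | app M N, σ => app (M.substF σ) (N.substF σ)
  | lam x M, σ =>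
      let y := freshVar ((M.fv.erase x).biUnion fun z => (σ z).fv)
      lam y (M.substF (Function.update σ x (var y)))

/-- Capture-avoiding substitution `M[N/x]`. -/
def subst (M : Lam) (x : ℕ) (N : Lam) : Lam :=
  M.substF fun z => if z = x then N else var z

/-- Being an abstraction. -/
def isAbs : Lam → Prop
  | lam _ _ => True
  | _ => False

end Lam

/-- One-step β-reduction. -/
inductive Beta : Lam → Lam → Prop
  | beta (x : ℕ) (M N : Lam) : Beta (.app (.lam x M) N) (M.subst x N)
  | appL {M M' : Lam} (N : Lam) : Beta M M' → Beta (.app M N) (.app M' N)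
  | appR {N N' : Lam} (M : Lam) : Beta N N' → Beta (.app M N) (.app M N')
  | lam (x : ℕ) {M M' : Lam} : Beta M M' → Beta (.lam x M) (.lam x M')

/-- One-step head reduction. -/
inductive Head : Lam → Lam → Prop
  | beta (x : ℕ) (M N : Lam) : Head (.app (.lam x M) N) (M.subst x N)
  | app {M M' : Lam} (N : Lam) : ¬ M.isAbs → Head M M' → Head (.app M N) (.app M' N)
  | lam (x : ℕ) {M M' : Lam} : Head M M' → Head (.lam x M) (.lam x M')

/-- Iterated head reduction. -/
def HeadStar : Lam → Lam → Prop := Relation.ReflTransGen Head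

/-- Terms of the shape `y M₁ ⋯ Mₖ`. -/
inductive Neutral : Lam → Prop
  | var (x : ℕ) : Neutral (.var x)
  | app {M : Lam} (N : Lam) : Neutral M → Neutral (.app M N)

/-- Head normal forms `λx₁…xₙ.y M₁ ⋯ Mₖ`. -/
inductive Hnf : Lam → Prop
  | neutral {M : Lam} : Neutral M → Hnf M
  | lam (x : ℕ) {M : Lam} : Hnf M → Hnf (.lam x M)

/-- `M` has a head normal form. -/
def HasHnf (M : Lam) : Prop := ∃ H, HeadStar M H ∧ Hnf H

/-! # Multi-types -/

/-- Simple types: atoms `a ∈ ℕ`, arrows `[]_X → β` and `[α₀,…,αₙ] → β`. -/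
inductive STy : Type
  | atom : ℕ → STy
  | arr0 : Finset ℕ → STy → STy
  | arrP : STy → List STy → STy → STy

/-- Multiset types: the annotated empty multiset `[]_X` or a
non-empty multiset `[α₀,…,αₙ]` (head plus tail). -/
inductive MTy : Type
  | empty : Finset ℕ → MTy
  | mk : STy → List STy → MTy

/-- The arrow type `ᾱ → β`. -/
def MTy.arr : MTy → STy → STy
  | .empty X, β => .arr0 X β
  | .mk α l, β => .arrP α l β

/-- The underlying multiset of simple types of a multiset type. -/
def MTy.toM : MTy → Multiset STy
  | .empty _ => 0
  | .mk α l => α ::ₘ (l : Multiset STy)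

/-- Multi-types: `σ ::= e_X | α`. -/
inductive OTy : Type
  | esum : Finset ℕ → OTy
  | simple : STy → OTy

mutual
/-- Atoms occurring in a simple type. -/
def STy.atoms : STy → Finset ℕ
  | .atom a => {a}
  | .arr0 _ β => β.atoms
  | .arrP α l β => α.atoms ∪ STy.atomsL l ∪ β.atoms
def STy.atomsL : List STy → Finset ℕ
  | [] => ∅
  | α :: l => α.atoms ∪ STy.atomsL l
end

/-! # Environments -/

/-- Type environments: finitely supported maps from variables
to finite multisets of simple types; added pointwise. -/
abbrev TEnv := ℕ →₀ Multiset STy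

/-- Variable environments: finite partial maps from variables to finite
sets of variables. -/
abbrev VEnv := Finmap (fun _ : ℕ => Finset ℕ)

namespace VEnv

/-- `⋃Δ`: the union of the values of `Δ`. -/
def uni (Δ : VEnv) : Finset ℕ :=
  Δ.keys.biUnion fun x => (Δ.lookup x).getD ∅

/-- Coherence `Δ₀ ≍ Δ₁`: agreement on the common domain. -/
def Coh (Δ₀ Δ₁ : VEnv) : Prop :=
  ∀ x : ℕ, x ∈ Δ₀ → x ∈ Δ₁ → Δ₀.lookup x = Δ₁.lookup x

end VEnv

/-! # The multi-type system for the λI-calculus -/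

mutual
/-- Typing judgement `Γ; Δ ⊢ M : σ`. -/
inductive Der : TEnv → VEnv → Lam → OTy → Prop
  | esum {Δ : VEnv} {M : Lam} :
      Δ.keys = M.fv → Der 0 Δ M (.esum Δ.uni)
  | ax (x : ℕ) (α : STy) (X : Finset ℕ) :
      Der (Finsupp.single x {α}) (Finmap.singleton x X) (.var x) (.simple α)
  | app {Γ₀ Γ₁ : TEnv} {Δ₀ Δ₁ : VEnv} {M N : Lam} {m : MTy} {β : STy} :
      Der Γ₀ Δ₀ M (.simple (m.arr β)) → DerB Γ₁ Δ₁ N m → VEnv.Coh Δ₀ Δ₁ →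
      Der (Γ₀ + Γ₁) (Δ₀ ∪ Δ₁) (.app M N) (.simple β)
  | lam0 {Γ : TEnv} {Δ : VEnv} {x : ℕ} {X : Finset ℕ} {M : Lam} {β : STy} :
      Γ x = 0 → x ∉ Δ → Der Γ (Δ.insert x X) M (.simple β) →
      Der Γ Δ (.lam x M) (.simple (.arr0 X β))
  | lamP {Γ : TEnv} {Δ : VEnv} {x : ℕ} {X : Finset ℕ} {M : Lam} {α : STy}
      {l : List STy} {β : STy} :
      Γ x = 0 → x ∉ Δ →
      Der (Γ + Finsupp.single x (MTy.mk α l).toM) (Δ.insert x X) M (.simple β) →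
      Der Γ Δ (.lam x M) (.simple (.arrP α l β))

/-- Typing judgement `Γ; Δ ⊢! M : ᾱ`. -/
inductive DerB : TEnv → VEnv → Lam → MTy → Prop
  | bang0 {Δ : VEnv} {M : Lam} :
      Δ.keys = M.fv → DerB 0 Δ M (.empty Δ.uni)
  | one {Γ : TEnv} {Δ : VEnv} {M : Lam} {α : STy} :
      Der Γ Δ M (.simple α) → DerB Γ Δ M (.mk α [])
  | cons {Γ₀ Γ₁ : TEnv} {Δ : VEnv} {M : Lam} {α α' : STy} {l : List STy} :
      Der Γ₀ Δ M (.simple α) → DerB Γ₁ Δ M (.mk α' l) →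
      DerB (Γ₀ + Γ₁) Δ M (.mk α (α' :: l))
end

/-- The multi-type interpretation `⟦M⟧`. -/
def interp (M : Lam) : Set (TEnv × VEnv × OTy) :=
  { p | Der p.1 p.2.1 M p.2.2 }

/-! # Ohana trees (coinductive equality, as a greatest fixpoint) -/

/-- Matching of the spines `y M₁ ⋯ Mₖ` of two head normal forms:
same head variable, same number of arguments, arguments related by `R`. -/
inductive SpineMatch (R : Lam → Lam → Prop) : Lam → Lam → Prop
  | var (y : ℕ) : SpineMatch R (.var y) (.var y)
  | app {P Q M N : Lam} : SpineMatch R P Q → R M N →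
      SpineMatch R (.app P M) (.app Q N)

/-- Matching of two head normal forms, comparing abstraction prefixes
up to renaming of the bound variables. -/
inductive HnfMatch (R : Lam → Lam → Prop) : Lam → Lam → Prop
  | base {P Q : Lam} : SpineMatch R P Q → HnfMatch R P Q
  | lam {x y : ℕ} {P Q : Lam} :
      (∀ z : ℕ, z ∉ (P.fv.erase x ∪ Q.fv.erase y) →
        HnfMatch R (P.subst x (.var z)) (Q.subst y (.var z))) →
      HnfMatch R (.lam x P) (.lam y Q)

/-- `R` is an Ohana-tree bisimulation. -/
def OTBisim (R : Lam → Lam → Prop) : Prop :=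
  ∀ M N, R M N →
    (¬ HasHnf M ∧ ¬ HasHnf N ∧ M.fv = N.fv) ∨
    (∃ P Q, HeadStar M P ∧ HeadStar N Q ∧ Hnf P ∧ Hnf Q ∧ HnfMatch R P Q)

/-- Equality of Ohana trees: `OT(M) = OT(N)`. -/
def OTEq (M N : Lam) : Prop := ∃ R, OTBisim R ∧ R M N

/-! # λI-resource terms -/

mutual
inductive RTm : Type
  | var : ℕ → RTm
  | lam : ℕ → RTm → RTm
  | app : RTm → RBag → RTm
inductive RBag : Type
  | empty : Finset ℕ → RBag
  | mk : RTm → List RTm → RBag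
end

noncomputable instance : DecidableEq RTm := fun _ _ => Classical.dec _
noncomputable instance : DecidableEq RBag := fun _ _ => Classical.dec _

mutual
/-- Free variables of a resource term. -/
def RTm.fv : RTm → Finset ℕ
  | .var x => {x}
  | .lam x s => s.fv.erase x
  | .app s b => s.fv ∪ b.fv
/-- Free variables of a bag. -/
def RBag.fv : RBag → Finset ℕ
  | .empty X => X
  | .mk h t => h.fv ∪ RTm.fvL t
/-- Free variables of a list of resource terms. -/
def RTm.fvL : List RTm → Finset ℕ
  | [] => ∅
  | h :: t => h.fv ∪ RTm.fvL t
end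

mutual
/-- λI-resource terms: in every abstraction `λx.s`, `x` occurs free in `s`. -/
inductive RTm.IsIr : RTm → Prop
  | var (x : ℕ) : RTm.IsIr (.var x)
  | lam {x : ℕ} {s : RTm} : x ∈ s.fv → RTm.IsIr s → RTm.IsIr (.lam x s)
  | app {s : RTm} {b : RBag} : RTm.IsIr s → RBag.IsIr b → RTm.IsIr (.app s b)
inductive RBag.IsIr : RBag → Prop
  | empty (X : Finset ℕ) : RBag.IsIr (.empty X)
  | mk {h : RTm} {t : List RTm} : RTm.IsIr h → (∀ u ∈ t, RTm.IsIr u) →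
      RBag.IsIr (.mk h t)
end

/-- The list of elements of a bag. -/
def RBag.toList : RBag → List RTm
  | .empty _ => []
  | .mk h t => h :: t

/-! Linear (bijective) substitution: `LSub s x ts t` means that `t` is obtained
by substituting the elements of the list `ts` for the free occurrences of `x`
in `s`, in left-to-right order (annotations of empty bags absorb). -/
mutual
inductive LSub : RTm → ℕ → List RTm → RTm → Prop
  | var_hit (x : ℕ) (t : RTm) : LSub (.var x) x [t] t
  | var_miss {x y : ℕ} : y ≠ x → LSub (.var y) x [] (.var y)
  | lam {x y : ℕ} {s : RTm} {ts : List RTm} {s' : RTm} :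
      y ≠ x → y ∉ RTm.fvL ts → LSub s x ts s' →
      LSub (.lam y s) x ts (.lam y s')
  | app {s : RTm} {b : RBag} {x : ℕ} {ts₁ ts₂ : List RTm} {s' : RTm} {b' : RBag} :
      LSub s x ts₁ s' → LSubB b x ts₂ b' →
      LSub (.app s b) x (ts₁ ++ ts₂) (.app s' b')
inductive LSubB : RBag → ℕ → List RTm → RBag → Prop
  | empty_hit {X : Finset ℕ} {x : ℕ} {ts : List RTm} :
      x ∈ X → LSubB (.empty X) x ts (.empty ((X.erase x) ∪ RTm.fvL ts))
  | empty_miss {X : Finset ℕ} {x : ℕ} :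
      x ∉ X → LSubB (.empty X) x [] (.empty X)
  | mk {h : RTm} {t : List RTm} {x : ℕ} {ts₁ ts₂ : List RTm} {h' : RTm}
      {t' : List RTm} :
      LSub h x ts₁ h' → LSubL t x ts₂ t' →
      LSubB (.mk h t) x (ts₁ ++ ts₂) (.mk h' t')
inductive LSubL : List RTm → ℕ → List RTm → List RTm → Prop
  | nil (x : ℕ) : LSubL [] x [] []
  | cons {h : RTm} {t : List RTm} {x : ℕ} {ts₁ ts₂ : List RTm} {h' : RTm}
      {t' : List RTm} :
      LSub h x ts₁ h' → LSubL t x ts₂ t' →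
      LSubL (h :: t) x (ts₁ ++ ts₂) (h' :: t')
end

/-- The root resource reduction step `(λx.s)b →r T`:
`T` is the sum of all results of bijective substitution of the elements
of `b` for the free occurrences of `x` in `s`. -/
def RootRed (x : ℕ) (s : RTm) (b : RBag) (T : Finset RTm) : Prop :=
  ∀ u : RTm, u ∈ T ↔ ∃ l : List RTm, l.Perm b.toList ∧ LSub s x l u

/-- Pushing an element on top of a bag. -/
def RBag.push (h : RTm) : RBag → RBag
  | .empty _ => .mk h []
  | .mk h' t => .mk h (h' :: t)

mutual
/-- One-step resource reduction of a term to a finite sum. -/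
inductive RStep : RTm → Finset RTm → Prop
  | root {x : ℕ} {s : RTm} {b : RBag} {T : Finset RTm} :
      RootRed x s b T → RStep (.app (.lam x s) b) T
  | appL {s : RTm} {T : Finset RTm} {b : RBag} :
      RStep s T → RStep (.app s b) (T.image fun s' => .app s' b)
  | appB {s : RTm} {b : RBag} {Tb : Finset RBag} :
      RStepB b Tb → RStep (.app s b) (Tb.image fun b' => .app s b')
  | lam {x : ℕ} {s : RTm} {T : Finset RTm} :
      RStep s T → RStep (.lam x s) (T.image fun s' => .lam x s')
/-- One-step resource reduction inside a bag. -/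
inductive RStepB : RBag → Finset RBag → Prop
  | head {h : RTm} {t : List RTm} {T : Finset RTm} :
      RStep h T → RStepB (.mk h t) (T.image fun h' => .mk h' t)
  | tail {h h₂ : RTm} {t : List RTm} {B : Finset RBag} :
      RStepB (.mk h₂ t) B → RStepB (.mk h (h₂ :: t)) (B.image (RBag.push h))
end

/-- One-step resource reduction on finite sums (linear extension). -/
inductive RRed : Finset RTm → Finset RTm → Prop
  | step {S : Finset RTm} {s : RTm} {T : Finset RTm} :
      s ∈ S → RStep s T → RRed S ((S.erase s) ∪ T)

/-- `→r*`. -/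
def RRedStar : Finset RTm → Finset RTm → Prop := Relation.ReflTransGen RRed

/-! # The resource multi-type system -/

mutual
/-- Resource typing judgement `Γ; Δ ⊢ s : α`. -/
inductive DerR : TEnv → VEnv → RTm → STy → Prop
  | ax (x : ℕ) (α : STy) (X : Finset ℕ) :
      DerR (Finsupp.single x {α}) (Finmap.singleton x X) (.var x) α
  | app {Γ₀ Γ₁ : TEnv} {Δ₀ Δ₁ : VEnv} {s : RTm} {b : RBag} {m : MTy} {β : STy} :
      DerR Γ₀ Δ₀ s (m.arr β) → DerRB Γ₁ Δ₁ b m → VEnv.Coh Δ₀ Δ₁ →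
      DerR (Γ₀ + Γ₁) (Δ₀ ∪ Δ₁) (.app s b) β
  | lam0 {Γ : TEnv} {Δ : VEnv} {x : ℕ} {X : Finset ℕ} {s : RTm} {β : STy} :
      Γ x = 0 → x ∉ Δ → DerR Γ (Δ.insert x X) s β →
      DerR Γ Δ (.lam x s) (.arr0 X β)
  | lamP {Γ : TEnv} {Δ : VEnv} {x : ℕ} {X : Finset ℕ} {s : RTm} {α : STy}
      {l : List STy} {β : STy} :
      Γ x = 0 → x ∉ Δ →
      DerR (Γ + Finsupp.single x (MTy.mk α l).toM) (Δ.insert x X) s β →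
      DerR Γ Δ (.lam x s) (.arrP α l β)
/-- Resource typing judgement `Γ; Δ ⊢! t̄ : ᾱ`. -/
inductive DerRB : TEnv → VEnv → RBag → MTy → Prop
  | bang0 {Δ : VEnv} : DerRB 0 Δ (.empty Δ.keys) (.empty Δ.uni)
  | one {Γ : TEnv} {Δ : VEnv} {t : RTm} {α : STy} :
      DerR Γ Δ t α → DerRB Γ Δ (.mk t []) (.mk α [])
  | cons {Γ₀ Γ₁ : TEnv} {Δ : VEnv} {t t' : RTm} {l : List RTm} {α α' : STy}
      {la : List STy} :
      DerR Γ₀ Δ t α → DerRB Γ₁ Δ (.mk t' l) (.mk α' la) →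
      DerRB (Γ₀ + Γ₁) Δ (.mk t (t' :: l)) (.mk α (α' :: la))
end

/-! # Taylor expansion -/

/-- `Taylor M s`: the resource term `s` belongs to the Taylor expansion `T(M)`. -/
inductive Taylor : Lam → RTm → Prop
  | var (x : ℕ) : Taylor (.var x) (.var x)
  | lam {M : Lam} {s : RTm} (x : ℕ) : Taylor M s → Taylor (.lam x M) (.lam x s)
  | app0 {M N : Lam} {s : RTm} : Taylor M s →
      Taylor (.app M N) (.app s (.empty N.fv))
  | appP {M N : Lam} {s t : RTm} {l : List RTm} :
      Taylor M s → Taylor N t → (∀ u ∈ l, Taylor N u) →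
      Taylor (.app M N) (.app s (.mk t l))

/-! # Miscellaneous constructions for the last statement -/

/-- The variable environment `Δ_id` mapping each `x ∈ s` to `{x}`. -/
def idEnv (s : Finset ℕ) : VEnv :=
  (s.sort (· ≤ ·)).foldr (fun x Δ => Δ.insert x ({x} : Finset ℕ)) ∅

/-- The term `y M₁ ⋯ Mₖ`. -/
def Lam.spineApp (y : ℕ) (l : List Lam) : Lam := l.foldl .app (.var y)

/-- The type `[]_{fv N₁} → ⋯ → []_{fv Nₖ} → a`. -/
def yTyRest (a : ℕ) : List Lam → STy
  | [] => .atom a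
  | N :: l => .arr0 N.fv (yTyRest a l)

/-- The type `[]_{fv M₁} → ⋯ → [α] → ⋯ → []_{fv Mₖ} → a`, with `[α]`
in the `i`-th argument position (0-based). -/
def yTy (α : STy) (a : ℕ) : List Lam → ℕ → STy
  | [], _ => .atom a
  | _ :: l, 0 => .arrP α [] (yTyRest a l)
  | N :: l, (i+1) => .arr0 N.fv (yTy α a l i)


theorem exists_renv (e : ℕ → Finset ℕ) (S : Finset ℕ) :
    ∃ E : VEnv, ∀ z, E.lookup z = if z ∈ S then some (e z) else none := by
  induction S using Finset.induction_on with
  | empty => exact ⟨∅, fun z => by simp⟩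
  | insert a S _ ih =>
    obtain ⟨E, hE⟩ := ih
    refine ⟨E.insert a (e a), fun z => ?_⟩
    by_cases h : z = a
    · subst h; simp
    · rw [Finmap.lookup_insert_of_ne _ h, hE]; simp [h]

noncomputable def renv (e : ℕ → Finset ℕ) (S : Finset ℕ) : VEnv := (exists_renv e S).choose

theorem renv_lookup (e : ℕ → Finset ℕ) (S : Finset ℕ) (z : ℕ) :
    (renv e S).lookup z = if z ∈ S then some (e z) else none :=
  (exists_renv e S).choose_spec z

theorem mem_renv (e : ℕ → Finset ℕ) (S : Finset ℕ) (z : ℕ) : z ∈ renv e S ↔ z ∈ S := by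
  rw [← Finmap.lookup_isSome, renv_lookup]; split_ifs <;> simp [*]

theorem renv_keys (e : ℕ → Finset ℕ) (S : Finset ℕ) : (renv e S).keys = S := by
  ext z; rw [Finmap.mem_keys, mem_renv]

theorem venv_ext {A B : VEnv} (h : ∀ z, A.lookup z = B.lookup z) : A = B :=
  Finmap.ext_lookup h

theorem union_lookup (A B : VEnv) (z : ℕ) :
    (A ∪ B).lookup z = if z ∈ A then A.lookup z else B.lookup z := by
  split_ifs with h
  · exact Finmap.lookup_union_left h
  · exact Finmap.lookup_union_right h

theorem renv_union (e : ℕ → Finset ℕ) (S T : Finset ℕ) :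
    renv e (S ∪ T) = renv e S ∪ renv e T := by
  apply venv_ext; intro z
  rw [union_lookup]
  simp only [renv_lookup, mem_renv, Finset.mem_union]
  by_cases h : z ∈ S <;> simp [h]

theorem renv_coh (e : ℕ → Finset ℕ) (S T : Finset ℕ) : VEnv.Coh (renv e S) (renv e T) := by
  intro z h1 h2
  rw [mem_renv] at h1 h2
  simp [renv_lookup, h1, h2]

theorem renv_uni (e : ℕ → Finset ℕ) (S : Finset ℕ) : (renv e S).uni = S.biUnion e := by
  unfold VEnv.uni
  rw [renv_keys]
  apply Finset.biUnion_congr rfl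
  intro z hz
  simp [renv_lookup, hz]

theorem freshVar_notMem (s : Finset ℕ) : Lam.freshVar s ∉ s := by
  intro h
  have := Finset.le_sup (f := id) h
  simp only [Lam.freshVar, id] at this
  omega

theorem keys_insert' (Δ : VEnv) (x : ℕ) (X : Finset ℕ) : (Δ.insert x X).keys = insert x Δ.keys := by
  ext z; simp [Finmap.mem_keys, Finmap.mem_insert]

theorem keys_erase_aux {Δ : VEnv} {x : ℕ} {X S : Finset ℕ} (hx : x ∉ Δ)
    (h : (Δ.insert x X).keys = S) : Δ.keys = S.erase x := by
  rw [← h, keys_insert', Finset.erase_insert]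
  rwa [Finmap.mem_keys]

mutual
theorem Der.dom {Γ : TEnv} {Δ : VEnv} {M : Lam} {τ : OTy} (h : Der Γ Δ M τ) :
    Δ.keys = M.fv ∧ ∀ z, Γ z ≠ 0 → z ∈ M.fv := by
  match h with
  | .esum h => exact ⟨h, fun z hz => absurd rfl hz⟩
  | .ax x α X =>
    refine ⟨by simp [Lam.fv], fun z hz => ?_⟩
    by_contra hn
    simp only [Lam.fv, Finset.mem_singleton] at hn
    exact hz (Finsupp.single_eq_of_ne hn)
  | .app h1 h2 _ =>
    have a := h1.dom
    have b := h2.dom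
    refine ⟨by rw [Finmap.keys_union, a.1, b.1]; rfl, fun z hz => ?_⟩
    simp only [Lam.fv, Finset.mem_union]
    by_contra hn
    push Not at hn
    apply hz
    have h3 := mt (a.2 z) hn.1
    have h4 := mt (b.2 z) hn.2
    rw [Finsupp.add_apply, not_not.1 h3, not_not.1 h4, add_zero]
  | .lam0 hx hd h =>
    have a := h.dom
    refine ⟨keys_erase_aux hd a.1, fun z hz => ?_⟩
    simp only [Lam.fv, Finset.mem_erase]
    exact ⟨fun e => hz (e ▸ hx), a.2 z hz⟩
  | .lamP hx hd h =>
    have a := h.dom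
    refine ⟨keys_erase_aux hd a.1, fun z hz => ?_⟩
    simp only [Lam.fv, Finset.mem_erase]
    refine ⟨fun e => hz (e ▸ hx), a.2 z ?_⟩
    rw [Finsupp.add_apply]
    intro h0
    exact hz (add_eq_zero.1 h0).1

theorem DerB.dom {Γ : TEnv} {Δ : VEnv} {M : Lam} {τ : MTy} (h : DerB Γ Δ M τ) :
    Δ.keys = M.fv ∧ ∀ z, Γ z ≠ 0 → z ∈ M.fv := by
  match h with
  | .bang0 h => exact ⟨h, fun z hz => absurd rfl hz⟩
  | .one h => exact h.dom
  | .cons h1 h2 =>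
    have a := h1.dom
    have b := h2.dom
    refine ⟨a.1, fun z hz => ?_⟩
    by_contra hn
    apply hz
    have h3 := mt (a.2 z) hn
    have h4 := mt (b.2 z) hn
    rw [Finsupp.add_apply, not_not.1 h3, not_not.1 h4, add_zero]
end

/-- The binder step on free variables. -/
theorem fv_update_aux (M : Lam) (σ : ℕ → Lam) (x y : ℕ)
    : M.fv.biUnion (fun z => (Function.update σ x (.var y) z).fv) =
      if x ∈ M.fv then insert y ((M.fv.erase x).biUnion fun z => (σ z).fv)
      else ((M.fv.erase x).biUnion fun z => (σ z).fv) := by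
  have key : (M.fv.erase x).biUnion (fun z => (Function.update σ x (.var y) z).fv) =
      (M.fv.erase x).biUnion fun z => (σ z).fv := by
    apply Finset.biUnion_congr rfl
    intro z hz
    rw [Function.update_of_ne (Finset.ne_of_mem_erase hz)]
  split_ifs with h
  · conv_lhs => rw [← Finset.insert_erase h]
    rw [Finset.biUnion_insert, key]
    simp [Lam.fv]
  · rw [← key, Finset.erase_eq_of_notMem h]

theorem fv_substF (M : Lam) : ∀ σ : ℕ → Lam,
    (M.substF σ).fv = M.fv.biUnion fun z => (σ z).fv := by
  induction M with
  | var x => intro σ; simp [Lam.substF, Lam.fv]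
  | app M N ih1 ih2 =>
    intro σ; simp only [Lam.substF, Lam.fv, ih1, ih2, Finset.union_biUnion]
  | lam x M ih =>
    intro σ
    have hf := freshVar_notMem ((M.fv.erase x).biUnion fun z => (σ z).fv)
    simp only [Lam.substF, Lam.fv]
    rw [ih, fv_update_aux]
    split_ifs
    · rw [Finset.erase_insert hf]
    · rw [Finset.erase_eq_of_notMem hf]

/-- Updating at a binder. -/
theorem renv_binder (M : Lam) (σ : ℕ → Lam) (x : ℕ) (hx : x ∈ M.fv) (e : ℕ → Finset ℕ)
    (X : Finset ℕ) (y : ℕ) (hy : y = Lam.freshVar ((M.fv.erase x).biUnion fun z => (σ z).fv)) :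
    renv (Function.update e y X) (M.substF (Function.update σ x (.var y))).fv =
      (renv e ((Lam.lam x M).substF σ).fv).insert y X := by
  have hf := freshVar_notMem ((M.fv.erase x).biUnion fun z => (σ z).fv)
  rw [← hy] at hf
  rw [fv_substF, fv_substF, fv_update_aux, if_pos hx]
  apply venv_ext; intro z
  rw [renv_lookup]
  by_cases h : z = y
  · subst h; simp
  · rw [Finmap.lookup_insert_of_ne _ h, renv_lookup, Function.update_of_ne h]
    simp only [Finset.mem_insert, h, false_or]
    rfl

theorem look_binder {M : Lam} {σ : ℕ → Lam} {x : ℕ} {e : ℕ → Finset ℕ}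
    {Δ : VEnv} {X : Finset ℕ} {y : ℕ}
    (hy : y = Lam.freshVar ((M.fv.erase x).biUnion fun z => (σ z).fv))
    (hΔ : ∀ z ∈ (Lam.lam x M).fv, Δ.lookup z = some ((σ z).fv.biUnion e)) :
    ∀ z ∈ M.fv, (Δ.insert x X).lookup z =
      some ((Function.update σ x (.var y) z).fv.biUnion (Function.update e y X)) := by
  have hf := freshVar_notMem ((M.fv.erase x).biUnion fun z => (σ z).fv)
  rw [← hy] at hf
  intro z hz
  by_cases h : z = x
  · subst h; simp [Lam.fv]
  · have hz' : z ∈ M.fv.erase x := Finset.mem_erase.2 ⟨h, hz⟩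
    rw [Finmap.lookup_insert_of_ne _ h, Function.update_of_ne h, hΔ z hz']
    congr 1
    apply Finset.biUnion_congr rfl
    intro w hw
    rw [Function.update_of_ne]
    rintro rfl
    exact hf (Finset.mem_biUnion.2 ⟨z, hz', hw⟩)

theorem uni_aux {M : Lam} {σ : ℕ → Lam} {e : ℕ → Finset ℕ} {Δ : VEnv} (hk : Δ.keys = M.fv)
    (hΔ : ∀ z ∈ M.fv, Δ.lookup z = some ((σ z).fv.biUnion e)) :
    Δ.uni = (renv e (M.substF σ).fv).uni := by
  rw [renv_uni, fv_substF, Finset.biUnion_biUnion, VEnv.uni, hk]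
  apply Finset.biUnion_congr rfl
  intro z hz
  rw [hΔ z hz]; rfl

theorem mapDomain_update_aux {Γ : TEnv} {x : ℕ} (hx : Γ x = 0) (ρ : ℕ → ℕ) (y : ℕ) :
    Γ.mapDomain (Function.update ρ x y) = Γ.mapDomain ρ := by
  apply Finsupp.mapDomain_congr
  intro z hz
  rw [Function.update_of_ne]
  rintro rfl
  exact (Finsupp.mem_support_iff.1 hz) hx

/-- The renamed environment vanishes at the fresh binder. -/
theorem mapDomain_fresh {Γ : TEnv} {S : Finset ℕ} (hS : ∀ z, Γ z ≠ 0 → z ∈ S)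
    {σ : ℕ → Lam} {ρ : ℕ → ℕ} (hρ : ∀ z, Γ z ≠ 0 → σ z = .var (ρ z)) {y : ℕ}
    (hy : y = Lam.freshVar (S.biUnion fun z => (σ z).fv)) : Γ.mapDomain ρ y = 0 := by
  classical
  have hf := freshVar_notMem (S.biUnion fun z => (σ z).fv)
  rw [← hy] at hf
  by_contra hn
  have := Finsupp.mapDomain_support (Finsupp.mem_support_iff.2 hn)
  obtain ⟨z, hz, rfl⟩ := Finset.mem_image.1 this
  have hz := Finsupp.mem_support_iff.1 hz
  apply hf
  refine Finset.mem_biUnion.2 ⟨z, hS z hz, ?_⟩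
  simp [hρ z hz, Lam.fv]

theorem fresh_notMem_renv (M : Lam) (σ : ℕ → Lam) (x : ℕ) (e : ℕ → Finset ℕ) :
    Lam.freshVar ((M.fv.erase x).biUnion fun z => (σ z).fv) ∉
      renv e ((Lam.lam x M).substF σ).fv := by
  rw [mem_renv, fv_substF]
  exact freshVar_notMem _

theorem left_ne {Γ₀ Γ₁ : TEnv} {z : ℕ} (h : Γ₀ z ≠ 0) : (Γ₀ + Γ₁) z ≠ 0 := by
  rw [Finsupp.add_apply]; intro h0; exact h (add_eq_zero.1 h0).1

theorem right_ne {Γ₀ Γ₁ : TEnv} {z : ℕ} (h : Γ₁ z ≠ 0) : (Γ₀ + Γ₁) z ≠ 0 := by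
  rw [Finsupp.add_apply]; intro h0; exact h (add_eq_zero.1 h0).2

theorem app_lookup {A B : VEnv} {M N : Lam} {f : ℕ → Finset ℕ}
    (hA : A.keys = M.fv) (hB : B.keys = N.fv) (hc : VEnv.Coh A B)
    (h : ∀ z ∈ (Lam.app M N).fv, (A ∪ B).lookup z = some (f z)) :
    (∀ z ∈ M.fv, A.lookup z = some (f z)) ∧ (∀ z ∈ N.fv, B.lookup z = some (f z)) := by
  constructor
  · intro z hz
    rw [← h z (Finset.mem_union_left _ hz), union_lookup, if_pos]
    rwa [← Finmap.mem_keys, hA]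
  · intro z hz
    rw [← h z (Finset.mem_union_right _ hz), union_lookup]
    split_ifs with hm
    · exact (hc z hm (by rwa [← Finmap.mem_keys, hB])).symm
    · rfl

mutual
theorem Der.substF {Γ : TEnv} {Δ : VEnv} {M : Lam} {τ : OTy} (h : Der Γ Δ M τ)
    (σ : ℕ → Lam) (ρ : ℕ → ℕ) (e : ℕ → Finset ℕ)
    (hρ : ∀ z, Γ z ≠ 0 → σ z = .var (ρ z))
    (hΔ : ∀ z ∈ M.fv, Δ.lookup z = some ((σ z).fv.biUnion e)) :
    Der (Γ.mapDomain ρ) (renv e (M.substF σ).fv) (M.substF σ) τ := by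
  match h with
  | .esum h =>
    rw [uni_aux h hΔ, Finsupp.mapDomain_zero]
    exact Der.esum (renv_keys _ _)
  | .ax x α X =>
    have h1 : σ x = .var (ρ x) := hρ x (by simp)
    rw [Finsupp.mapDomain_single]
    have h2 : renv e ((Lam.var x).substF σ).fv = Finmap.singleton (ρ x) (e (ρ x)) := by
      apply venv_ext; intro z
      rw [renv_lookup]
      simp only [Lam.substF, h1, Lam.fv, Finset.mem_singleton]
      split_ifs with hz
      · subst hz; simp
      · symm; rw [Finmap.lookup_eq_none]; simpa using hz
    rw [h2]
    simp only [Lam.substF, h1]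
    exact Der.ax _ _ _
  | .app h1 h2 hc =>
    obtain ⟨hl, hr⟩ := app_lookup h1.dom.1 h2.dom.1 hc hΔ
    have a := h1.substF σ ρ e (fun z hz => hρ z (left_ne hz)) hl
    have b := h2.substF σ ρ e (fun z hz => hρ z (right_ne hz)) hr
    have c := Der.app a b (renv_coh _ _ _)
    rw [← renv_union, ← Finsupp.mapDomain_add] at c
    exact c
  | @Der.lam0 _ _ x X M β hx hd h =>
    have hdom := h.dom
    have hxM : x ∈ M.fv := by rw [← hdom.1, keys_insert']; simp
    obtain ⟨y, hy⟩ : ∃ y, y = Lam.freshVar ((M.fv.erase x).biUnion fun z => (σ z).fv) := ⟨_, rfl⟩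
    have a := h.substF (Function.update σ x (.var y)) (Function.update ρ x y)
      (Function.update e y X) (by
        intro z hz
        have hne : z ≠ x := by rintro rfl; exact hz hx
        rw [Function.update_of_ne hne, Function.update_of_ne hne]
        exact hρ z hz) (look_binder hy hΔ)
    rw [renv_binder M σ x hxM e X y hy, mapDomain_update_aux hx] at a
    have hS : ∀ z, Γ z ≠ 0 → z ∈ M.fv.erase x := (Der.lam0 hx hd h).dom.2
    have hd' := fresh_notMem_renv M σ x e
    rw [← hy] at hd'
    have b := Der.lam0 (mapDomain_fresh hS hρ hy) hd' a
    have hl : (Lam.lam x M).substF σ = .lam y (M.substF (Function.update σ x (.var y))) := by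
      rw [hy]; rfl
    rw [← hl] at b
    exact b
  | @Der.lamP _ _ x X M α l β hx hd h =>
    have hdom := h.dom
    have hxM : x ∈ M.fv := by rw [← hdom.1, keys_insert']; simp
    obtain ⟨y, hy⟩ : ∃ y, y = Lam.freshVar ((M.fv.erase x).biUnion fun z => (σ z).fv) := ⟨_, rfl⟩
    have a := h.substF (Function.update σ x (.var y)) (Function.update ρ x y)
      (Function.update e y X) (by
        intro z hz
        by_cases hne : z = x
        · subst hne; simp
        · rw [Function.update_of_ne hne, Function.update_of_ne hne]
          apply hρ z
          rwa [Finsupp.add_apply, Finsupp.single_eq_of_ne hne, add_zero] at hz)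
        (look_binder hy hΔ)
    rw [renv_binder M σ x hxM e X y hy, Finsupp.mapDomain_add, mapDomain_update_aux hx,
      Finsupp.mapDomain_single, Function.update_self] at a
    have hS : ∀ z, Γ z ≠ 0 → z ∈ M.fv.erase x := (Der.lamP hx hd h).dom.2
    have hd' := fresh_notMem_renv M σ x e
    rw [← hy] at hd'
    have b := Der.lamP (mapDomain_fresh hS hρ hy) hd' a
    have hl : (Lam.lam x M).substF σ = .lam y (M.substF (Function.update σ x (.var y))) := by
      rw [hy]; rfl
    rw [← hl] at b
    exact b

theorem DerB.substF {Γ : TEnv} {Δ : VEnv} {M : Lam} {τ : MTy} (h : DerB Γ Δ M τ)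
    (σ : ℕ → Lam) (ρ : ℕ → ℕ) (e : ℕ → Finset ℕ)
    (hρ : ∀ z, Γ z ≠ 0 → σ z = .var (ρ z))
    (hΔ : ∀ z ∈ M.fv, Δ.lookup z = some ((σ z).fv.biUnion e)) :
    DerB (Γ.mapDomain ρ) (renv e (M.substF σ).fv) (M.substF σ) τ := by
  match h with
  | .bang0 h =>
    rw [uni_aux h hΔ, Finsupp.mapDomain_zero]
    exact DerB.bang0 (renv_keys _ _)
  | .one h => exact DerB.one (h.substF σ ρ e hρ hΔ)
  | .cons h1 h2 =>
    rw [Finsupp.mapDomain_add]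
    exact DerB.cons (h1.substF σ ρ e (fun z hz => hρ z (left_ne hz)) hΔ)
      (h2.substF σ ρ e (fun z hz => hρ z (right_ne hz)) hΔ)
end

/-- Forward Substitution Lemma, case 1. -/
theorem stmt1 (Γ : TEnv) (Δ Δ' : VEnv) (M N : Lam) (x : ℕ) (β : STy)
    (hM : M.IsI) (hN : N.IsI)
    (hxΓ : x ∉ Γ.support) (hxΔ : x ∉ Δ) (hcoh : VEnv.Coh Δ Δ')
    (h1 : Der Γ (Δ.insert x (VEnv.uni Δ')) M (.simple β))
    (h2 : DerB 0 Δ' N (.empty (VEnv.uni Δ'))) :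
    Der Γ (Δ ∪ Δ') (M.subst x N) (.simple β) := by
  have hk := h1.dom.1
  have hk' := h2.dom.1
  have hxM : x ∈ M.fv := by rw [← hk, keys_insert']; simp
  have hΔk : Δ.keys = M.fv.erase x := keys_erase_aux hxΔ hk
  have hΓx : Γ x = 0 := by simpa using hxΓ
  have a := h1.substF (fun z => if z = x then N else .var z) id
    (fun z => ((Δ ∪ Δ').lookup z).getD ∅) (by
      intro z hz
      have hne : z ≠ x := by rintro rfl; exact hz hΓx
      simp [hne]) (by
      intro z hz
      by_cases h : z = x
      · subst h
        simp only [Finmap.lookup_insert, if_true]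
        rw [VEnv.uni, hk']
        congr 1
        apply Finset.biUnion_congr rfl
        intro w hw
        rw [union_lookup]
        split_ifs with hm
        · rw [hcoh w hm (by rwa [← Finmap.mem_keys, hk'])]
        · rfl
      · have hm : z ∈ Δ := by
          rw [← Finmap.mem_keys, hΔk]; exact Finset.mem_erase.2 ⟨h, hz⟩
        rw [Finmap.lookup_insert_of_ne _ h]
        simp only [h, if_false, Lam.fv, Finset.singleton_biUnion]
        rw [union_lookup, if_pos hm]
        obtain ⟨v, hv⟩ := Finmap.mem_iff.1 hm
        simp [hv])
  rw [Finsupp.mapDomain_id] at a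
  have hE : renv (fun z => ((Δ ∪ Δ').lookup z).getD ∅) (M.subst x N).fv = Δ ∪ Δ' := by
    have hfv : (M.subst x N).fv = (Δ ∪ Δ').keys := by
      rw [Finmap.keys_union, hΔk, hk', Lam.subst, fv_substF]
      conv_lhs => rw [← Finset.insert_erase hxM]
      rw [Finset.biUnion_insert, Finset.union_comm]
      congr 1
      · ext w
        simp only [Finset.mem_biUnion, Finset.mem_erase]
        constructor
        · rintro ⟨z, ⟨h, hz⟩, hw⟩
          simp only [h, if_false, Lam.fv, Finset.mem_singleton] at hw
          subst hw; exact ⟨h, hz⟩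
        · rintro ⟨h, hz⟩
          exact ⟨w, ⟨h, hz⟩, by simp [h, Lam.fv]⟩
      · simp
    apply venv_ext; intro z
    rw [renv_lookup, hfv]
    split_ifs with hz
    · obtain ⟨v, hv⟩ := Finmap.mem_iff.1 (Finmap.mem_keys.1 hz)
      simp [hv]
    · rw [Finmap.mem_keys] at hz
      exact (Finmap.lookup_eq_none.2 hz).symm
  rw [← hE]
  exact a
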